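/- arXiv:2502.13692 — 2 statements merged into one kernel-verified Lean document; each statement's English description precedes it below -/
import Mathlib

section
/- Let w_1, w_2, x_1, x_2 ∈ ℝ^m be unit vectors and y_1, y_2 ∈ {−1,1} be labels with y_1⟨w_1, x_1⟩ = y_2⟨w_2, x_2⟩. Then the real random variables y_1⟨h_{A,t}(w_1), A x_1⟩ and y_2⟨h_{A,t}(w_2), A x_2⟩ have the same distribution; i.e., the distribution of y⟨h_{A,t}(w), Ax⟩ is completely determined by the margin y⟨w, x⟩. -/
open MeasureTheory ProbabilityTheory

noncomputable section

/-- Dot product on `Fin m → ℝ`. -/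
def dotp {m : ℕ} (w x : Fin m → ℝ) : ℝ := ∑ j, w j * x j

/-- Margin loss `L_D^γ(w)` of `w` under a distribution `D` on `ℝ^m × ℝ`
(labels are encoded as reals in `{-1,1}`). -/
def lossD {m : ℕ} (D : Measure ((Fin m → ℝ) × ℝ)) (γ : ℝ) (w : Fin m → ℝ) : ℝ :=
  (D {p | p.2 * dotp w p.1 ≤ γ}).toReal

/-- Empirical margin loss `L_S^γ(w)` on a training set `S` of `n` labeled points. -/
def lossS {m n : ℕ} (S : Fin n → (Fin m → ℝ) × ℝ) (γ : ℝ) (w : Fin m → ℝ) : ℝ :=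
  (Nat.card {i : Fin n // (S i).2 * dotp w (S i).1 ≤ γ} : ℝ) / n

/-- The i.i.d. sample measure `D^n` over training sets of size `n`. -/
def trainM {m : ℕ} (D : Measure ((Fin m → ℝ) × ℝ)) (n : ℕ) :
    Measure (Fin n → (Fin m → ℝ) × ℝ) := Measure.pi fun _ => D

/-- Spacing of the rounding grid: `(10 √k)⁻¹`. -/
def gridStep (k : ℕ) : ℝ := (10 * Real.sqrt k)⁻¹

/-- The largest grid point `(1/2)(10√k)⁻¹ + z(10√k)⁻¹ ≤ g`. -/
def roundDown (k : ℕ) (g : ℝ) : ℝ :=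
  gridStep k / 2 + (⌊(g - gridStep k / 2) / gridStep k⌋ : ℝ) * gridStep k

/-- The probability `p(z)` of rounding `g` down, chosen so the rounding is unbiased. -/
def roundProb (k : ℕ) (g : ℝ) : ℝ := 1 - (g - roundDown k g) / gridStep k

/-- Matrix-vector product, `(Aw)_i = ∑ j A i j * w j`. -/
def matVec {k m : ℕ} (A : Fin k → Fin m → ℝ) (w : Fin m → ℝ) : Fin k → ℝ :=
  fun i => ∑ j, A i j * w j

/-- The randomized rounding `h_{A,t}(w)` of `Aw` to the grid. -/
def hRound {k m : ℕ} (A : Fin k → Fin m → ℝ) (t : Fin k → ℝ) (w : Fin m → ℝ) :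
    Fin k → ℝ :=
  fun i => if t i ≤ roundProb k (matVec A w i)
    then roundDown k (matVec A w i)
    else roundDown k (matVec A w i) + gridStep k

/-- The joint law of `(A, t)`: `A` has i.i.d. `N(0,1/k)` entries and `t` has i.i.d.
uniform `[0,1]` coordinates, independent of `A`. -/
def roundMeasure (k m : ℕ) : Measure ((Fin k → Fin m → ℝ) × (Fin k → ℝ)) :=
  (Measure.pi fun _ : Fin k => Measure.pi fun _ : Fin m =>
      gaussianReal 0 (k : NNReal)⁻¹).prod
    (Measure.pi fun _ : Fin k => volume.restrict (Set.Icc (0 : ℝ) 1))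

/-- Reduced setup: the data domain `X ⊆ S^d ⊂ ℝ^{d+1}` of unit vectors whose first
`d` coordinates have norm at most `cγ`. -/
def Xset (d : ℕ) (cγ : ℝ) : Set (Fin (d+1) → ℝ) :=
  {x | (∑ j, x j ^ 2) = 1 ∧ (∑ j : Fin d, x j.castSucc ^ 2) ≤ cγ ^ 2}

/-- Reduced setup: the hypothesis class `H = S^{d-1} × {0} ⊂ ℝ^{d+1}`. -/
def Hset (d : ℕ) : Set (Fin (d+1) → ℝ) :=
  {w | (∑ j, w j ^ 2) = 1 ∧ w (Fin.last d) = 0}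

/-- `γ_i = 2^{i-1} n^{-1/2}`. -/
def γlo (n i : ℕ) : ℝ := 2 ^ (i - 1) / Real.sqrt n

/-- `γ_{i+1} = 2^i n^{-1/2}`. -/
def γhi (n i : ℕ) : ℝ := 2 ^ i / Real.sqrt n

/-- `ℓ_{j+1} = 2^j n^{-1}`. -/
def ellhi (n j : ℕ) : ℝ := 2 ^ j / n

/-- The interval `L_j`: `L_0 = [0, n⁻¹]`, and `L_j = (2^{j-1}/n, 2^j/n]` for `j ≥ 1`. -/
def Lset (n j : ℕ) : Set ℝ :=
  if j = 0 then Set.Icc 0 (n : ℝ)⁻¹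
  else Set.Ioc ((2 : ℝ) ^ (j - 1) / n) ((2 : ℝ) ^ j / n)

/-- Margin loss of `h ∈ ℝ^k` under the pushforward distribution `A·D`. -/
def kLossD {k m : ℕ} (D : Measure ((Fin m → ℝ) × ℝ)) (γ : ℝ) (h : Fin k → ℝ)
    (A : Fin k → Fin m → ℝ) : ℝ :=
  (D {q | q.2 * (∑ r, h r * ∑ s, A r s * q.1 s) ≤ γ}).toReal

/-- Empirical margin loss of `h ∈ ℝ^k` on the transformed training set `A·S`. -/
def kLossS {k m n : ℕ} (S : Fin n → (Fin m → ℝ) × ℝ) (γ : ℝ) (h : Fin k → ℝ)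
    (A : Fin k → Fin m → ℝ) : ℝ :=
  (Nat.card {i : Fin n // (S i).2 * (∑ r, h r * ∑ s, A r s * (S i).1 s) ≤ γ} : ℝ) / n

/-- Specification of the function `φ` from the paper, for margin parameter `γi`:
on `[-cγ, 0]` it equals the probability (over the randomized rounding) that the rounded
margin exceeds `γi/2` given original margin `α`; on `(0, γi]` it interpolates linearly to
`0`; on `(γi, cγ]` it is `0`. -/
def phiSpec (d k : ℕ) (cγ γi : ℝ) (φ : ℝ → ℝ) : Prop :=
  (∀ (w x : Fin (d+1) → ℝ) (y : ℝ), w ∈ Hset d → x ∈ Xset d cγ →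
      (y = 1 ∨ y = -1) → y * dotp w x ≤ 0 →
      φ (y * dotp w x) =
        (roundMeasure k (d+1)
          {p | γi / 2 < y * ∑ r, hRound p.1 p.2 w r * ∑ s, p.1 r s * x s}).toReal) ∧
  (∀ α : ℝ, 0 < α → α ≤ γi → φ α = ((γi - α) / γi) * φ 0) ∧
  (∀ α : ℝ, γi < α → α ≤ cγ → φ α = 0)

/-- Specification of the function `ρ` from the paper, for margin parameter `γi`. -/
def rhoSpec (d k : ℕ) (cγ γi : ℝ) (ρ : ℝ → ℝ) : Prop :=
  (∀ (w x : Fin (d+1) → ℝ) (y : ℝ), w ∈ Hset d → x ∈ Xset d cγ →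
      (y = 1 ∨ y = -1) → γi < y * dotp w x →
      ρ (y * dotp w x) =
        (roundMeasure k (d+1)
          {p | y * ∑ r, hRound p.1 p.2 w r * ∑ s, p.1 r s * x s ≤ γi / 2}).toReal) ∧
  (∀ α : ℝ, 0 < α → α ≤ γi →
      ∀ (w x : Fin (d+1) → ℝ) (y : ℝ), w ∈ Hset d → x ∈ Xset d cγ →
      (y = 1 ∨ y = -1) → y * dotp w x = γi →
      ρ α = (α / γi) *
        (roundMeasure k (d+1)
          {p | y * ∑ r, hRound p.1 p.2 w r * ∑ s, p.1 r s * x s ≤ γi / 2}).toReal) ∧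
  (∀ α : ℝ, -cγ ≤ α → α ≤ 0 → ρ α = 0)

/-- The characteristic functional of a vector of i.i.d. centred Gaussians depends only on the
Euclidean norm of its argument. -/
lemma integral_exp_dotp_pi_gaussianReal {m : ℕ} (c : NNReal) (v : Fin m → ℝ) :
    ∫ a, Complex.exp ((dotp a v : ℝ) * Complex.I)
        ∂(Measure.pi fun _ : Fin m => gaussianReal 0 c) =
      Complex.exp (-(c * (∑ j, v j ^ 2 : ℝ) / 2)) := by
  have h : ∀ a : Fin m → ℝ, Complex.exp ((dotp a v : ℝ) * Complex.I) =
      ∏ j, Complex.exp (v j * a j * Complex.I) := fun a => by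
    rw [← Complex.exp_sum, dotp, Complex.ofReal_sum, Finset.sum_mul]
    simp only [Complex.ofReal_mul, mul_comm]
  simp_rw [h]
  rw [integral_fintype_prod_eq_prod (fun j (x : ℝ) => Complex.exp (v j * x * Complex.I))]
  simp_rw [← charFun_apply_real, charFun_gaussianReal]
  rw [← Complex.exp_sum]
  congr 1
  push_cast
  rw [Finset.mul_sum, Finset.sum_div, ← Finset.sum_neg_distrib]
  exact Finset.sum_congr rfl fun j _ => by ring

/-- Under i.i.d. centred Gaussian coordinates, the joint law of two linear functionals is
determined by the Gram matrix of their coefficient vectors. -/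
lemma map_dotp_pair_pi_gaussianReal_eq {m : ℕ} (c : NNReal) {w₁ w₂ x₁ x₂ : Fin m → ℝ}
    (hw : ∑ j, w₁ j ^ 2 = ∑ j, w₂ j ^ 2) (hx : ∑ j, x₁ j ^ 2 = ∑ j, x₂ j ^ 2)
    (hwx : dotp w₁ x₁ = dotp w₂ x₂) :
    (Measure.pi fun _ : Fin m => gaussianReal 0 c).map (fun a => (dotp a w₁, dotp a x₁)) =
      (Measure.pi fun _ : Fin m => gaussianReal 0 c).map
        (fun a => (dotp a w₂, dotp a x₂)) := by
  have hL : ∀ (L : StrongDual ℝ (ℝ × ℝ)) (w x a : Fin m → ℝ),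
      L (dotp a w, dotp a x) = dotp a (fun j => L (1, 0) * w j + L (0, 1) * x j) := by
    intro L w x a
    have hp : (dotp a w, dotp a x) =
        dotp a w • ((1, 0) : ℝ × ℝ) + dotp a x • ((0, 1) : ℝ × ℝ) := by simp
    rw [hp, map_add, map_smul, map_smul]
    simp only [dotp, smul_eq_mul, Finset.sum_mul, ← Finset.sum_add_distrib]
    exact Finset.sum_congr rfl fun j _ => by ring
  have hsq : ∀ (s t : ℝ) (w x : Fin m → ℝ), ∑ j, (s * w j + t * x j) ^ 2 =
      s ^ 2 * ∑ j, w j ^ 2 + 2 * s * t * dotp w x + t ^ 2 * ∑ j, x j ^ 2 := by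
    intro s t w x
    simp only [dotp, Finset.mul_sum, ← Finset.sum_add_distrib]
    exact Finset.sum_congr rfl fun j _ => by ring
  have hmeas : ∀ w x : Fin m → ℝ, Measurable fun a => (dotp a w, dotp a x) := by
    intro w x
    unfold dotp
    fun_prop
  refine Measure.ext_of_charFunDual ?_
  funext L
  rw [charFunDual_apply, charFunDual_apply,
    integral_map (hmeas _ _).aemeasurable (by fun_prop),
    integral_map (hmeas _ _).aemeasurable (by fun_prop)]
  simp_rw [hL, integral_exp_dotp_pi_gaussianReal, hsq, hw, hx, hwx]

/-- Rounding of a single value `g` with threshold `t`. -/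
def roundCoord (k : ℕ) (g t : ℝ) : ℝ :=
  if t ≤ roundProb k g then roundDown k g else roundDown k g + gridStep k

lemma measurable_roundDown (k : ℕ) : Measurable (roundDown k) := by
  unfold roundDown
  fun_prop

lemma measurable_roundProb (k : ℕ) : Measurable (roundProb k) := by
  have := measurable_roundDown k
  unfold roundProb
  fun_prop

lemma Measurable.roundCoord {α : Type*} [MeasurableSpace α] {f g : α → ℝ} (k : ℕ)
    (hf : Measurable f) (hg : Measurable g) : Measurable fun a => roundCoord k (f a) (g a) :=
  Measurable.ite (measurableSet_le hg ((measurable_roundProb k).comp hf))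
    ((measurable_roundDown k).comp hf) (((measurable_roundDown k).comp hf).add_const _)

/-- The law of the rounded inner product, in terms of the joint law of `(⟨a, w⟩, ⟨a, y x⟩)` for a
single Gaussian row `a`. -/
lemma map_rounded_margin_eq (k m : ℕ) (w x : Fin m → ℝ) (y : ℝ) :
    Measure.map (fun p => y * ∑ r, hRound p.1 p.2 w r * ∑ s, p.1 r s * x s)
        (roundMeasure k m) =
      Measure.map (fun q : (Fin k → ℝ × ℝ) × (Fin k → ℝ) =>
          ∑ r, roundCoord k (q.1 r).1 (q.2 r) * (q.1 r).2)
        ((Measure.pi fun _ : Fin k =>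
            (Measure.pi fun _ : Fin m => gaussianReal 0 (k : NNReal)⁻¹).map
              (fun a => (dotp a w, dotp a (fun j => y * x j)))).prod
          (Measure.pi fun _ : Fin k => volume.restrict (Set.Icc (0 : ℝ) 1))) := by
  have hrow : Measurable fun a : Fin m → ℝ => (dotp a w, dotp a (fun j => y * x j)) := by
    unfold dotp
    fun_prop
  have hrows : Measurable fun (A : Fin k → Fin m → ℝ) r =>
      (dotp (A r) w, dotp (A r) (fun j => y * x j)) :=
    measurable_pi_lambda _ fun r => hrow.comp (measurable_pi_apply r)
  have hprob := Measure.isProbabilityMeasure_map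
    (μ := Measure.pi fun _ : Fin m => gaussianReal 0 (k : NNReal)⁻¹) hrow.aemeasurable
  have hround : Measurable fun q : (Fin k → ℝ × ℝ) × (Fin k → ℝ) =>
      ∑ r, roundCoord k (q.1 r).1 (q.2 r) * (q.1 r).2 :=
    Finset.measurable_sum _ fun r _ =>
      (Measurable.roundCoord k (by fun_prop) (by fun_prop)).mul (by fun_prop)
  have hprod := Measure.map_prod_map
    (Measure.pi fun _ : Fin k => Measure.pi fun _ : Fin m => gaussianReal 0 (k : NNReal)⁻¹)
    (Measure.pi fun _ : Fin k => volume.restrict (Set.Icc (0 : ℝ) 1)) hrows measurable_id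
  rw [Measure.map_id] at hprod
  rw [← Measure.pi_map_pi fun _ => hrow.aemeasurable, hprod,
    Measure.map_map hround (hrows.prodMap measurable_id)]
  unfold roundMeasure
  congr 1
  funext p
  simp only [Function.comp_apply, Prod.map_fst, Prod.map_snd, id, Finset.mul_sum]
  refine Finset.sum_congr rfl fun r _ => ?_
  simp only [dotp, Finset.mul_sum]
  refine Finset.sum_congr rfl fun s _ => ?_
  change y * (roundCoord k (matVec p.1 w r) (p.2 r) * (p.1 r s * x s)) =
    roundCoord k (matVec p.1 w r) (p.2 r) * (p.1 r s * (y * x s))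
  ring

/-- (Claim 3.8 of the paper.) The distribution of `y⟨h_{A,t}(w), Ax⟩`
is completely determined by the margin `y⟨w,x⟩`, for unit vectors `w, x`. -/
theorem statement12 (k m : ℕ) (hk : 1 ≤ k)
    (w₁ w₂ x₁ x₂ : Fin m → ℝ) (y₁ y₂ : ℝ)
    (hw₁ : (∑ j, w₁ j ^ 2) = 1) (hx₁ : (∑ j, x₁ j ^ 2) = 1)
    (hw₂ : (∑ j, w₂ j ^ 2) = 1) (hx₂ : (∑ j, x₂ j ^ 2) = 1)
    (hy₁ : y₁ = 1 ∨ y₁ = -1) (hy₂ : y₂ = 1 ∨ y₂ = -1)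
    (hmargin : y₁ * dotp w₁ x₁ = y₂ * dotp w₂ x₂) :
    Measure.map (fun p => y₁ * ∑ r, hRound p.1 p.2 w₁ r * ∑ s, p.1 r s * x₁ s)
        (roundMeasure k m) =
      Measure.map (fun p => y₂ * ∑ r, hRound p.1 p.2 w₂ r * ∑ s, p.1 r s * x₂ s)
        (roundMeasure k m) := by
  have hsq : ∀ (y : ℝ) (x : Fin m → ℝ), (y = 1 ∨ y = -1) → (∑ j, x j ^ 2) = 1 →
      ∑ j, (y * x j) ^ 2 = 1 := by
    rintro y x (rfl | rfl) hx <;> simpa using hx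
  have hdot : ∀ (y : ℝ) (w x : Fin m → ℝ), dotp w (fun j => y * x j) = y * dotp w x := by
    intro y w x
    simp only [dotp, Finset.mul_sum, mul_left_comm]
  rw [map_rounded_margin_eq, map_rounded_margin_eq,
    map_dotp_pair_pi_gaussianReal_eq _ (hw₁.trans hw₂.symm)
      ((hsq y₁ x₁ hy₁ hx₁).trans (hsq y₂ x₂ hy₂ hx₂).symm)
      ((hdot y₁ w₁ x₁).trans (hmargin.trans (hdot y₂ w₂ x₂).symm))]
end
end

section
/- There exist a sufficiently small constant c_γ > 0 and a constant k_0 such that for all integers k ≥ k_0 and all margins 0 < γ_i ≤ c_γ the following monotonicity holds: for unit vectors w_1, x_1, w_2, x_2 ∈ ℝ^m and labels y_1, y_2 ∈ {−1,1} with 0 ≤ y_1⟨w_1,x_1⟩ ≤ y_2⟨w_2,x_2⟩ ≤ γ_i, one has Pr_{A,t}[ y_1⟨h_{A,t}(w_1), A x_1⟩ > γ_i/2 ] ≤ Pr_{A,t}[ y_2⟨h_{A,t}(w_2), A x_2⟩ > γ_i/2 ]. -/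
open MeasureTheory ProbabilityTheory

noncomputable section

lemma gaussianReal_pi_map_linear {ι : Type*} [Fintype ι] (v : NNReal) (c : ι → ℝ) (s : NNReal)
    (hs : (s : ℝ) = v * ∑ j, c j ^ 2) :
    (Measure.pi fun _ : ι => gaussianReal 0 v).map (fun a => ∑ j, c j * a j) =
      gaussianReal 0 s := by
  have hm : Measurable fun a : ι → ℝ => ∑ j, c j * a j := by fun_prop
  have : IsProbabilityMeasure
      ((Measure.pi fun _ : ι => gaussianReal 0 v).map (fun a => ∑ j, c j * a j)) :=
    Measure.isProbabilityMeasure_map hm.aemeasurable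
  apply Measure.ext_of_charFun
  ext t
  rw [charFun_gaussianReal, charFun_apply_real, integral_map hm.aemeasurable (by fun_prop)]
  have h1 : ∀ a : ι → ℝ, Complex.exp (t * ((∑ j, c j * a j : ℝ) : ℂ) * Complex.I) =
      ∏ j, Complex.exp (((t * c j : ℝ) : ℂ) * (a j : ℂ) * Complex.I) := by
    intro a
    rw [← Complex.exp_sum]
    congr 1
    push_cast
    rw [Finset.mul_sum, Finset.sum_mul]
    exact Finset.sum_congr rfl fun j _ => by ring
  simp_rw [h1]
  rw [integral_fintype_prod_eq_prod (f := fun j (x : ℝ) =>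
    Complex.exp (((t * c j : ℝ) : ℂ) * (x : ℂ) * Complex.I))]
  simp_rw [← charFun_apply_real, charFun_gaussianReal]
  rw [← Complex.exp_sum]
  congr 1
  have hs' : (s : ℂ) = v * ∑ j, (c j : ℂ) ^ 2 := by
    have := congrArg (fun r : ℝ => (r : ℂ)) hs
    simpa using this
  push_cast
  rw [hs', Finset.mul_sum, Finset.sum_mul, Finset.sum_div]
  simp only [mul_zero, zero_mul, zero_sub, ← Finset.sum_neg_distrib]
  exact Finset.sum_congr rfl fun j _ => by ring

lemma gaussianReal_prod_map_linear (v : NNReal) (a b : ℝ) (s : NNReal)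
    (hs : (s : ℝ) = v * (a ^ 2 + b ^ 2)) :
    ((gaussianReal 0 v).prod (gaussianReal 0 v)).map (fun p => a * p.1 + b * p.2) =
      gaussianReal 0 s := by
  have h : (fun p : ℝ × ℝ => a * p.1 + b * p.2) =
      (fun p : ℝ × ℝ => p.1 + p.2) ∘ Prod.map (a * ·) (b * ·) := rfl
  rw [h, ← Measure.map_map (by fun_prop) (by fun_prop),
    ← Measure.map_prod_map _ _ (by fun_prop) (by fun_prop), gaussianReal_map_const_mul,
    gaussianReal_map_const_mul]
  change Measure.conv _ _ = _
  rw [gaussianReal_conv_gaussianReal]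
  congr 1
  · simp
  · ext
    simp only [NNReal.coe_add, NNReal.coe_mul, hs]
    simp
    ring

lemma gaussianReal_pi_map_pair {ι : Type*} [Fintype ι] (v : NNReal) (w x : ι → ℝ) (α β : ℝ)
    (hw : ∑ j, w j ^ 2 = 1) (hx : ∑ j, x j ^ 2 = 1) (hα : ∑ j, w j * x j = α)
    (hβ : α ^ 2 + β ^ 2 = 1) :
    (Measure.pi fun _ : ι => gaussianReal 0 v).map
        (fun a => (∑ j, a j * w j, ∑ j, a j * x j)) =
      ((gaussianReal 0 v).prod (gaussianReal 0 v)).map (fun p => (p.1, α * p.1 + β * p.2)) := by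
  have hm : Measurable fun a : ι → ℝ => (∑ j, a j * w j, ∑ j, a j * x j) := by fun_prop
  have hm' : Measurable fun p : ℝ × ℝ => (p.1, α * p.1 + β * p.2) := by fun_prop
  have := Measure.isProbabilityMeasure_map (μ := Measure.pi fun _ : ι => gaussianReal 0 v)
    hm.aemeasurable
  have := Measure.isProbabilityMeasure_map
    (μ := (gaussianReal 0 v).prod (gaussianReal 0 v)) hm'.aemeasurable
  apply Measure.ext_of_charFunDual
  ext L
  have hL : ∀ p : ℝ × ℝ, L p = L (1, 0) * p.1 + L (0, 1) * p.2 := by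
    intro p
    have : p = p.1 • ((1 : ℝ), (0 : ℝ)) + p.2 • ((0 : ℝ), (1 : ℝ)) := by ext <;> simp
    conv_lhs => rw [this]
    rw [map_add, map_smul, map_smul]
    simp [mul_comm]
  set P := L (1, 0)
  set Q := L (0, 1)
  rw [charFunDual_eq_charFun_map_one, charFunDual_eq_charFun_map_one,
    Measure.map_map (by fun_prop) hm, Measure.map_map (by fun_prop) hm']
  have e1 : L ∘ (fun a : ι → ℝ => (∑ j, a j * w j, ∑ j, a j * x j)) =
      fun a => ∑ j, (P * w j + Q * x j) * a j := by
    ext a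
    simp only [Function.comp, hL, Finset.mul_sum, ← Finset.sum_add_distrib]
    exact Finset.sum_congr rfl fun j _ => by ring
  have e2 : L ∘ (fun p : ℝ × ℝ => (p.1, α * p.1 + β * p.2)) =
      fun p => (P + Q * α) * p.1 + (Q * β) * p.2 := by
    ext p
    simp only [Function.comp, hL]
    ring
  have e3 : ∑ j, (P * w j + Q * x j) ^ 2 = (P + Q * α) ^ 2 + (Q * β) ^ 2 := by
    have : ∑ j, (P * w j + Q * x j) ^ 2 = P ^ 2 * ∑ j, w j ^ 2 + 2 * P * Q * ∑ j, w j * x j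
        + Q ^ 2 * ∑ j, x j ^ 2 := by
      simp only [Finset.mul_sum, ← Finset.sum_add_distrib]
      exact Finset.sum_congr rfl fun j _ => by ring
    rw [this, hw, hx, hα]
    linear_combination -Q ^ 2 * hβ
  rw [e1, e2, gaussianReal_pi_map_linear v _
      (v * ⟨(P + Q * α) ^ 2 + (Q * β) ^ 2, by positivity⟩) (by rw [e3]; rfl),
    gaussianReal_prod_map_linear v _ _
      (v * ⟨(P + Q * α) ^ 2 + (Q * β) ^ 2, by positivity⟩) rfl]

lemma gridStep_pos {k : ℕ} (hk : 0 < k) : 0 < gridStep k := by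
  unfold gridStep; positivity

lemma gridStep_sq (k : ℕ) (hk : 0 < k) : k * gridStep k ^ 2 = 1 / 100 := by
  have : (0 : ℝ) < k := by exact_mod_cast hk
  unfold gridStep
  rw [inv_pow, mul_pow, Real.sq_sqrt this.le]
  field_simp
  norm_num

lemma abs_roundCoord_sub_le {k : ℕ} (hk : 0 < k) (g t : ℝ) :
    |roundCoord k g t - g| ≤ gridStep k := by
  have hs := gridStep_pos hk
  have h1 := Int.floor_le ((g - gridStep k / 2) / gridStep k)
  have h2 := Int.lt_floor_add_one ((g - gridStep k / 2) / gridStep k)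
  rw [le_div_iff₀ hs] at h1
  rw [div_lt_iff₀ hs] at h2
  unfold roundCoord roundDown
  rw [abs_le]
  split_ifs <;> constructor <;> linarith

lemma gridStep_half_le_abs_roundCoord {k : ℕ} (hk : 0 < k) (g t : ℝ) :
    gridStep k / 2 ≤ |roundCoord k g t| := by
  have hs := gridStep_pos hk
  have key : ∀ z : ℤ, gridStep k / 2 ≤ |gridStep k / 2 + z * gridStep k| := by
    intro z
    rcases le_or_gt 0 z with hz | hz
    · have : (0 : ℝ) ≤ z := by exact_mod_cast hz
      refine le_trans ?_ (le_abs_self _)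
      nlinarith
    · have : (z : ℝ) ≤ -1 := by exact_mod_cast Int.le_sub_one_of_lt hz
      refine le_trans ?_ (neg_le_abs _)
      nlinarith
  unfold roundCoord roundDown
  split_ifs
  · exact key _
  · convert key (⌊(g - gridStep k / 2) / gridStep k⌋ + 1) using 2
    push_cast
    ring

@[fun_prop]
lemma measurable_roundCoord (k : ℕ) : Measurable fun p : ℝ × ℝ => roundCoord k p.1 p.2 := by
  have h1 := measurable_roundDown k
  have h2 : Measurable (roundProb k) := by
    unfold roundProb
    fun_prop
  unfold roundCoord
  exact Measurable.ite (measurableSet_le (by fun_prop) (by fun_prop)) (by fun_prop) (by fun_prop)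

/-- Lower bound for the correlation of a vector with its rounding. -/
lemma le_sum_roundCoord_mul {k : ℕ} (hk : 0 < k) (g t : Fin k → ℝ) :
    (∑ r, g r ^ 2) / 2 - 1 / 200 ≤ ∑ r, roundCoord k (g r) (t r) * g r := by
  have h : ∀ r, g r ^ 2 / 2 - gridStep k ^ 2 / 2 ≤ roundCoord k (g r) (t r) * g r := by
    intro r
    have h0 := abs_le.1 (abs_roundCoord_sub_le hk (g r) (t r))
    have h1 : (roundCoord k (g r) (t r) - g r) ^ 2 ≤ gridStep k ^ 2 := sq_le_sq' h0.1 h0.2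
    nlinarith [sq_nonneg (roundCoord k (g r) (t r))]
  calc (∑ r, g r ^ 2) / 2 - 1 / 200 = ∑ r, (g r ^ 2 / 2 - gridStep k ^ 2 / 2) := by
        rw [Finset.sum_sub_distrib, Finset.sum_div, Finset.sum_const, Finset.card_univ,
          Fintype.card_fin, nsmul_eq_mul]
        linarith [gridStep_sq k hk]
    _ ≤ _ := Finset.sum_le_sum fun r _ => h r

lemma le_sum_roundCoord_sq {k : ℕ} (hk : 0 < k) (g t : Fin k → ℝ) :
    1 / 400 ≤ ∑ r, roundCoord k (g r) (t r) ^ 2 := by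
  calc (1 : ℝ) / 400 = ∑ _r : Fin k, (gridStep k / 2) ^ 2 := by
        rw [Finset.sum_const, Finset.card_univ, Fintype.card_fin, nsmul_eq_mul]
        linarith [gridStep_sq k hk]
    _ ≤ _ := Finset.sum_le_sum fun r _ => by
        rw [← sq_abs (roundCoord k (g r) (t r))]
        have := gridStep_pos hk
        gcongr
        exact gridStep_half_le_abs_roundCoord hk _ _

lemma sum_roundCoord_sq_le {k : ℕ} (hk : 0 < k) (g t : Fin k → ℝ) :
    ∑ r, roundCoord k (g r) (t r) ^ 2 ≤ 11 / 10 * (∑ r, g r ^ 2) + 11 / 100 := by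
  have h : ∀ r, roundCoord k (g r) (t r) ^ 2 ≤ 11 / 10 * g r ^ 2 + 11 * gridStep k ^ 2 := by
    intro r
    have h0 := abs_le.1 (abs_roundCoord_sub_le hk (g r) (t r))
    have h1 : (roundCoord k (g r) (t r) - g r) ^ 2 ≤ gridStep k ^ 2 := sq_le_sq' h0.1 h0.2
    nlinarith [sq_nonneg (g r - 10 * (roundCoord k (g r) (t r) - g r))]
  calc _ ≤ ∑ r, (11 / 10 * g r ^ 2 + 11 * gridStep k ^ 2) := Finset.sum_le_sum fun r _ => h r
    _ = _ := by
        rw [Finset.sum_add_distrib, ← Finset.mul_sum, Finset.sum_const, Finset.card_univ,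
          Fintype.card_fin, nsmul_eq_mul]
        linarith [gridStep_sq k hk]

/-- The margin threshold, normalised so that the Gaussian part has variance `1 / k`. -/
def threshold (γ a n α : ℝ) : ℝ := (γ / 2 - α * a) / (√(1 - α ^ 2) * √n)

section threshold
variable {γ a n N α₁ α₂ : ℝ}

lemma inv_sqrt_one_sub_sq_bounds (h0 : 0 ≤ α₁) (h12 : α₁ ≤ α₂) (h2 : α₂ ≤ 1 / 100) :
    1 ≤ (√(1 - α₁ ^ 2))⁻¹ ∧ (√(1 - α₁ ^ 2))⁻¹ ≤ (√(1 - α₂ ^ 2))⁻¹ ∧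
      (√(1 - α₂ ^ 2))⁻¹ ≤ 101 / 100 ∧
      (√(1 - α₂ ^ 2))⁻¹ - (√(1 - α₁ ^ 2))⁻¹ ≤ (α₂ - α₁) / 10 := by
  have hp : ∀ α : ℝ, 0 ≤ α → α ≤ 1 / 100 → 100 / 101 ≤ √(1 - α ^ 2) ∧ √(1 - α ^ 2) ≤ 1 ∧
      √(1 - α ^ 2) ^ 2 = 1 - α ^ 2 := by
    intro α h h'
    refine ⟨Real.le_sqrt_of_sq_le (by nlinarith), ?_, Real.sq_sqrt (by nlinarith)⟩
    rw [Real.sqrt_le_one]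
    nlinarith
  obtain ⟨a1, a2, a3⟩ := hp α₁ h0 (h12.trans h2)
  obtain ⟨b1, b2, b3⟩ := hp α₂ (h0.trans h12) h2
  set s := √(1 - α₁ ^ 2)
  set t := √(1 - α₂ ^ 2)
  have hst : t ≤ s := Real.sqrt_le_sqrt (by nlinarith)
  refine ⟨(one_le_inv₀ (by linarith)).2 a2, ?_, ?_, ?_⟩
  · gcongr
  · rw [inv_le_comm₀ (by linarith) (by norm_num)]
    linarith
  · rw [inv_sub_inv (by linarith) (by linarith), div_le_iff₀ (by nlinarith)]
    have h : (s - t) * (s + t) = (α₂ - α₁) * (α₂ + α₁) := by nlinarith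
    have h3 : s - t ≤ (α₂ - α₁) / 20 := by
      have : (s - t) * 1 ≤ (s - t) * (s + t) := by
        apply mul_le_mul_of_nonneg_left <;> linarith
      nlinarith
    have h4 : (1 : ℝ) / 2 ≤ t * s := by nlinarith
    nlinarith

lemma threshold_eq (γ a n α : ℝ) :
    threshold γ a n α = (γ / 2 - α * a) * (√(1 - α ^ 2))⁻¹ * (√n)⁻¹ := by
  unfold threshold
  rw [div_eq_mul_inv, mul_inv, mul_assoc]

/-- If the correlation `a` is bounded below then the threshold decreases at a linear rate. -/
lemma threshold_sub_le (h0 : 0 ≤ α₁) (h12 : α₁ ≤ α₂) (h2 : α₂ ≤ 1 / 100)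
    (hγ' : γ ≤ 1 / 100) (ha : 1 / 100 ≤ a) :
    (α₂ - α₁) / 120 * (√n)⁻¹ ≤ threshold γ a n α₁ - threshold γ a n α₂ := by
  obtain ⟨q1, q2, q3, q4⟩ := inv_sqrt_one_sub_sq_bounds h0 h12 h2
  rw [threshold_eq, threshold_eq]
  set q := (√(1 - α₁ ^ 2))⁻¹
  set q' := (√(1 - α₂ ^ 2))⁻¹
  have h3 : α₂ - α₁ ≤ α₂ * q' - α₁ * q := by nlinarith
  have h4 : (α₂ - α₁) / 120 ≤ a * (α₂ * q' - α₁ * q) - γ / 2 * (q' - q) := by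
    have : 1 / 100 * (α₂ - α₁) ≤ a * (α₂ * q' - α₁ * q) := by
      apply mul_le_mul ha h3 <;> linarith
    have : γ / 2 * (q' - q) ≤ (1 / 200) * ((α₂ - α₁) / 10) := by
      apply mul_le_mul <;> linarith
    linarith
  calc _ ≤ (a * (α₂ * q' - α₁ * q) - γ / 2 * (q' - q)) * (√n)⁻¹ :=
        mul_le_mul_of_nonneg_right h4 (by positivity)
    _ = _ := by ring

lemma inv_sqrt_le_twenty (hn : 1 / 400 ≤ n) : (√n)⁻¹ ≤ 20 := by
  rw [inv_le_comm₀ (Real.sqrt_pos.2 (by linarith)) (by norm_num)]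
  exact Real.le_sqrt_of_sq_le (by linarith)

lemma abs_mul_inv_sqrt_le (hn : 1 / 400 ≤ n) (hc : a ^ 2 ≤ n * N) : |a| * (√n)⁻¹ ≤ √N := by
  have hn0 : 0 < √n := Real.sqrt_pos.2 (by linarith)
  rw [← div_eq_mul_inv, div_le_iff₀ hn0, mul_comm, ← Real.sqrt_mul (by linarith),
    ← Real.sqrt_sq_eq_abs]
  exact Real.sqrt_le_sqrt hc

lemma abs_threshold_sub_le (h0 : 0 ≤ α₁) (h12 : α₁ ≤ α₂) (h2 : α₂ ≤ 1 / 100) (hγ : 0 ≤ γ)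
    (hγ' : γ ≤ 1 / 100) (hn : 1 / 400 ≤ n) (hN : N ≤ 1 / 25) (hc : a ^ 2 ≤ n * N) :
    |threshold γ a n α₁ - threshold γ a n α₂| ≤ α₂ - α₁ := by
  obtain ⟨q1, q2, q3, q4⟩ := inv_sqrt_one_sub_sq_bounds h0 h12 h2
  rw [threshold_eq, threshold_eq]
  set q := (√(1 - α₁ ^ 2))⁻¹
  set q' := (√(1 - α₂ ^ 2))⁻¹
  have h3 : |a| * (√n)⁻¹ ≤ 1 / 5 :=
    (abs_mul_inv_sqrt_le hn hc).trans (by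
      rw [Real.sqrt_le_left (by norm_num)]; linarith)
  have h5 := inv_sqrt_le_twenty hn
  have h6 : 0 ≤ (√n)⁻¹ := by positivity
  have h7 : 0 ≤ α₂ * q' - α₁ * q := by nlinarith
  have h8 : α₂ * q' - α₁ * q ≤ 2 * (α₂ - α₁) := by nlinarith
  have e : (γ / 2 - α₁ * a) * q * (√n)⁻¹ - (γ / 2 - α₂ * a) * q' * (√n)⁻¹ =
      (a * (√n)⁻¹) * (α₂ * q' - α₁ * q) - γ / 2 * (√n)⁻¹ * (q' - q) := by ring
  rw [e]
  calc _ ≤ |(a * (√n)⁻¹) * (α₂ * q' - α₁ * q)| + |γ / 2 * (√n)⁻¹ * (q' - q)| := abs_sub _ _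
    _ = |a| * (√n)⁻¹ * (α₂ * q' - α₁ * q) + γ / 2 * (√n)⁻¹ * (q' - q) := by
        rw [abs_mul, abs_mul, abs_of_nonneg h6, abs_of_nonneg h7,
          abs_of_nonneg (a := γ / 2 * (√n)⁻¹ * (q' - q))]
        apply mul_nonneg <;> [positivity; linarith]
    _ ≤ 1 / 5 * (2 * (α₂ - α₁)) + 1 / 10 * ((α₂ - α₁) / 10) := by
        have h9 : γ / 2 * (√n)⁻¹ ≤ 1 / 10 := by nlinarith
        have : 0 ≤ γ / 2 * (√n)⁻¹ := by positivity
        gcongr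
    _ ≤ α₂ - α₁ := by linarith

lemma threshold_sq_le {α : ℝ} (h0 : 0 ≤ α) (hαγ : α ≤ γ) (hγ' : γ ≤ 1 / 100)
    (hn : 1 / 400 ≤ n) (hN : N ≤ 3) (hc : a ^ 2 ≤ n * N) :
    threshold γ a n α ^ 2 ≤ 1 / 25 := by
  obtain ⟨q1, -, q3, -⟩ := inv_sqrt_one_sub_sq_bounds h0 le_rfl (hαγ.trans hγ')
  rw [threshold_eq]
  set q := (√(1 - α ^ 2))⁻¹
  have h3 : |a| * (√n)⁻¹ ≤ 2 :=
    (abs_mul_inv_sqrt_le hn hc).trans (by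
      rw [Real.sqrt_le_left (by norm_num)]; linarith)
  have h5 := inv_sqrt_le_twenty hn
  have h6 : 0 ≤ (√n)⁻¹ := by positivity
  rw [show (1 : ℝ) / 25 = (1 / 5) ^ 2 by norm_num]
  apply sq_le_sq'
  all_goals
    have h1 := neg_abs_le a
    have h2 := le_abs_self a
    have hu : a * (√n)⁻¹ ≤ 2 := by nlinarith
    have hl : -2 ≤ a * (√n)⁻¹ := by nlinarith
    have hw : |γ / 2 * (√n)⁻¹ - α * (a * (√n)⁻¹)| ≤ 12 / 100 := by
      rw [abs_le]
      constructor <;> nlinarith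
    have hw := abs_le.1 hw
    rw [show (γ / 2 - α * a) * q * (√n)⁻¹ = (γ / 2 * (√n)⁻¹ - α * (a * (√n)⁻¹)) * q by ring]
    nlinarith
end threshold

lemma gaussianReal_real_Ioi_sub {v : NNReal} {y₁ y₂ : ℝ} (h : y₂ ≤ y₁) (hv : v ≠ 0) :
    (gaussianReal 0 v).real (Set.Ioi y₂) - (gaussianReal 0 v).real (Set.Ioi y₁) =
      ∫ x in y₂..y₁, gaussianPDFReal 0 v x := by
  have h1 : Set.Ioi y₂ = Set.Ioc y₂ y₁ ∪ Set.Ioi y₁ := (Set.Ioc_union_Ioi_eq_Ioi h).symm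
  rw [h1, measureReal_union (by
    rw [Set.disjoint_left]; intro x hx hx'; exact absurd hx.2 (not_le.2 hx')) measurableSet_Ioi,
    add_sub_cancel_right, intervalIntegral.integral_of_le h, measureReal_def,
    gaussianReal_apply_eq_integral 0 hv, ENNReal.toReal_ofReal]
  exact integral_nonneg fun x => gaussianPDFReal_nonneg 0 v x

lemma le_gaussianReal_real_Ioi_sub {v : NNReal} {y₁ y₂ M : ℝ} (h : y₂ ≤ y₁) (hv : v ≠ 0)
    (h1 : y₁ ^ 2 ≤ M) (h2 : y₂ ^ 2 ≤ M) :
    (√(2 * Real.pi * v))⁻¹ * Real.exp (-M / (2 * v)) * (y₁ - y₂) ≤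
      (gaussianReal 0 v).real (Set.Ioi y₂) - (gaussianReal 0 v).real (Set.Ioi y₁) := by
  rw [gaussianReal_real_Ioi_sub h hv]
  have : ∫ _x in y₂..y₁, (√(2 * Real.pi * v))⁻¹ * Real.exp (-M / (2 * v)) =
      (√(2 * Real.pi * v))⁻¹ * Real.exp (-M / (2 * v)) * (y₁ - y₂) := by
    rw [intervalIntegral.integral_const, smul_eq_mul, mul_comm]
  rw [← this]
  refine intervalIntegral.integral_mono_on h (by simp)
    (integrable_gaussianPDFReal 0 v).intervalIntegrable fun x hx => ?_
  have hx2 : x ^ 2 ≤ M := by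
    rcases le_total 0 x with h0 | h0
    · nlinarith [hx.1, hx.2]
    · nlinarith [hx.1, hx.2]
  rw [gaussianPDFReal, sub_zero]
  gcongr

lemma gaussianReal_real_Ioi_sub_le {v : NNReal} {y₁ y₂ : ℝ} (h : y₂ ≤ y₁) (hv : v ≠ 0) :
    (gaussianReal 0 v).real (Set.Ioi y₂) - (gaussianReal 0 v).real (Set.Ioi y₁) ≤
      (√(2 * Real.pi * v))⁻¹ * (y₁ - y₂) := by
  rw [gaussianReal_real_Ioi_sub h hv]
  have : ∫ _x in y₂..y₁, (√(2 * Real.pi * v))⁻¹ = (√(2 * Real.pi * v))⁻¹ * (y₁ - y₂) := by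
    rw [intervalIntegral.integral_const, smul_eq_mul, mul_comm]
  rw [← this]
  refine intervalIntegral.integral_mono_on h
    (integrable_gaussianPDFReal 0 v).intervalIntegrable (by simp) fun x hx => ?_
  rw [gaussianPDFReal]
  refine mul_le_of_le_one_right (by positivity) (Real.exp_le_one_iff.2 ?_)
  have : 0 ≤ (x - 0) ^ 2 / (2 * (v : ℝ)) := by positivity
  rw [neg_div]
  linarith

lemma abs_gaussianReal_real_Ioi_sub_le {v : NNReal} (y₁ y₂ : ℝ) (hv : v ≠ 0) :
    |(gaussianReal 0 v).real (Set.Ioi y₂) - (gaussianReal 0 v).real (Set.Ioi y₁)| ≤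
      (√(2 * Real.pi * v))⁻¹ * |y₁ - y₂| := by
  wlog h : y₂ ≤ y₁ generalizing y₁ y₂
  · rw [abs_sub_comm, abs_sub_comm y₁]
    exact this y₂ y₁ (le_of_not_ge h)
  rw [abs_of_nonneg (sub_nonneg.2 h), abs_of_nonneg]
  · exact gaussianReal_real_Ioi_sub_le h hv
  · exact sub_nonneg.2 (measureReal_mono (Set.Ioi_subset_Ioi h))

lemma integral_exp_neg_mul_sq_gaussianReal {v : NNReal} (hv : v ≠ 0) (s : ℝ) (hs : 0 ≤ s) :
    ∫ x, Real.exp (-s * x ^ 2) ∂(gaussianReal 0 v) = (√(1 + 2 * s * v))⁻¹ := by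
  have hv' : (0 : ℝ) < v := by positivity
  rw [integral_gaussianReal_eq_integral_smul hv]
  have : ∀ x : ℝ, gaussianPDFReal 0 v x • Real.exp (-s * x ^ 2) =
      (√(2 * Real.pi * v))⁻¹ * Real.exp (-((1 + 2 * s * v) / (2 * v)) * x ^ 2) := by
    intro x
    rw [gaussianPDFReal, smul_eq_mul, mul_assoc, ← Real.exp_add]
    congr 2
    field_simp
    ring
  simp_rw [this]
  rw [integral_const_mul, integral_gaussian, ← Real.sqrt_inv, ← Real.sqrt_inv,
    ← Real.sqrt_mul (by positivity)]
  congr 1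
  field_simp

section chiSquare
variable {k : ℕ}

/-- Left tail bound for the normalised chi-square distribution. -/
lemma measureReal_sum_sq_lt_le (hk : 0 < k) :
    (Measure.pi fun _ : Fin k => gaussianReal 0 (k : NNReal)⁻¹).real
      {g | ∑ r, g r ^ 2 < 1 / 25} ≤ (1 / 3) ^ k := by
  have hk' : (0 : ℝ) < k := by exact_mod_cast hk
  set P := Measure.pi fun _ : Fin k => gaussianReal 0 (k : NNReal)⁻¹
  have hint : ∫ g, Real.exp (-(12 * k) * ∑ r, g r ^ 2) ∂P = (1 / 5) ^ k := by
    have : ∀ g : Fin k → ℝ, Real.exp (-(12 * k) * ∑ r, g r ^ 2) =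
        ∏ r, Real.exp (-(12 * k) * g r ^ 2) := by
      intro g
      rw [← Real.exp_sum, Finset.mul_sum]
    simp_rw [this]
    rw [integral_fintype_prod_eq_prod (f := fun _ (x : ℝ) => Real.exp (-(12 * k) * x ^ 2))]
    simp_rw [integral_exp_neg_mul_sq_gaussianReal (v := (k : NNReal)⁻¹) (by simp; omega) (12 * k)
      (by positivity)]
    rw [Finset.prod_const, Finset.card_univ, Fintype.card_fin]
    congr 1
    have : (1 : ℝ) + 2 * (12 * k) * ((k : NNReal)⁻¹ : NNReal) = 5 ^ 2 := by
      push_cast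
      field_simp
      norm_num
    rw [this, Real.sqrt_sq (by norm_num)]
    norm_num
  have hmark := mul_meas_ge_le_integral_of_nonneg (μ := P)
    (f := fun g => Real.exp (-(12 * k) * ∑ r, g r ^ 2))
    (ae_of_all _ fun g => (Real.exp_pos _).le)
    (Integrable.of_bound (C := 1) (Measurable.aestronglyMeasurable (by fun_prop)) (ae_of_all _ fun g => by
      rw [Real.norm_of_nonneg (Real.exp_pos _).le, Real.exp_le_one_iff]
      have : 0 ≤ ∑ r, g r ^ 2 := by positivity
      nlinarith [mul_nonneg hk'.le this])) (Real.exp (-(12 * k) * (1 / 25)))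
  rw [hint] at hmark
  have hsub : P.real {g | ∑ r, g r ^ 2 < 1 / 25} ≤
      P.real {g | Real.exp (-(12 * k) * (1 / 25)) ≤ Real.exp (-(12 * k) * ∑ r, g r ^ 2)} := by
    refine measureReal_mono fun g hg => ?_
    rw [Set.mem_ofPred_eq] at hg ⊢
    rw [Real.exp_le_exp]
    nlinarith
  have hexp : Real.exp (12 / 25) ≤ 5 / 3 := by
    have := Real.exp_one_lt_d9
    have e : Real.exp (12 / 25) ^ 25 ≤ (5 / 3 : ℝ) ^ 25 := by
      rw [← Real.exp_nat_mul, show ((25 : ℕ) : ℝ) * (12 / 25) = ((12 : ℕ) : ℝ) * 1 by norm_num,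
        Real.exp_nat_mul]
      calc Real.exp 1 ^ 12 ≤ 2.7182818286 ^ 12 := by gcongr
        _ ≤ _ := by norm_num
    exact le_of_pow_le_pow_left₀ (by norm_num) (by norm_num) e
  have hprod : Real.exp (-(12 * k) * (1 / 25)) * Real.exp (12 / 25) ^ k = 1 := by
    rw [← Real.exp_nat_mul, ← Real.exp_add]
    convert Real.exp_zero using 2
    ring
  calc P.real {g | ∑ r, g r ^ 2 < 1 / 25}
      = Real.exp (12 / 25) ^ k * (Real.exp (-(12 * k) * (1 / 25)) *
          P.real {g | ∑ r, g r ^ 2 < 1 / 25}) := by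
        rw [← mul_assoc, mul_comm (Real.exp (12 / 25) ^ k), hprod, one_mul]
    _ ≤ (5 / 3) ^ k * (1 / 5) ^ k := by
        gcongr
        exact (mul_le_mul_of_nonneg_left hsub (Real.exp_pos _).le).trans hmark
    _ = (1 / 3) ^ k := by rw [← mul_pow]; norm_num

lemma measureReal_three_lt_sum_sq_le (hk : 0 < k) :
    (Measure.pi fun _ : Fin k => gaussianReal 0 (k : NNReal)⁻¹).real
      {g | 3 < ∑ r, g r ^ 2} ≤ 1 / 3 := by
  have hk' : (0 : ℝ) < k := by exact_mod_cast hk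
  set P := Measure.pi fun _ : Fin k => gaussianReal 0 (k : NNReal)⁻¹
  have hi : Integrable (fun x : ℝ => x ^ 2) (gaussianReal 0 (k : NNReal)⁻¹) :=
    (memLp_id_gaussianReal 2).integrable_sq
  have hmp : ∀ r : Fin k, MeasurePreserving (fun g : Fin k → ℝ => g r) P
      (gaussianReal 0 (k : NNReal)⁻¹) := fun r => measurePreserving_eval _ r
  have hi' : ∀ r : Fin k, Integrable (fun g : Fin k → ℝ => g r ^ 2) P := fun r =>
    (hmp r).integrable_comp_of_integrable hi
  have hvar : ∫ x, x ^ 2 ∂(gaussianReal 0 (k : NNReal)⁻¹) = (k : ℝ)⁻¹ := by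
    have h := variance_fun_id_gaussianReal (μ := 0) (v := (k : NNReal)⁻¹)
    rw [variance_eq_integral (by fun_prop), integral_id_gaussianReal] at h
    simpa using h
  have hint : ∫ g, ∑ r, g r ^ 2 ∂P = 1 := by
    rw [integral_finsetSum _ fun r _ => hi' r]
    have : ∀ r : Fin k, ∫ g, g r ^ 2 ∂P = (k : ℝ)⁻¹ := by
      intro r
      rw [← hvar, ← (hmp r).map_eq, integral_map (hmp r).measurable.aemeasurable (by fun_prop)]
    simp [this, hk'.ne']
  have hmark := mul_meas_ge_le_integral_of_nonneg (μ := P) (f := fun g => ∑ r, g r ^ 2)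
    (ae_of_all _ fun g => by positivity) (integrable_finsetSum _ fun r _ => hi' r) 3
  rw [hint] at hmark
  have : P.real {g | 3 < ∑ r, g r ^ 2} ≤ P.real {g | 3 ≤ ∑ r, g r ^ 2} :=
    measureReal_mono (Set.ofPred_subset_ofPred.2 fun g hg => hg.le)
  linarith
end chiSquare

/-- The probability, given the rounding variables `t`, that the rounded margin exceeds `γ / 2`. -/
def condProb (k : ℕ) (γ α : ℝ) (g t : Fin k → ℝ) : ENNReal :=
  gaussianReal 0 (k : NNReal)⁻¹ (Set.Ioi (threshold γ (∑ r, roundCoord k (g r) (t r) * g r)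
    (∑ r, roundCoord k (g r) (t r) ^ 2) α))

lemma pi_gaussianReal_margin {k : ℕ} (γ α : ℝ) (hα : α ^ 2 < 1) (h g : Fin k → ℝ)
    (hh : 0 < ∑ r, h r ^ 2) :
    (Measure.pi fun _ : Fin k => gaussianReal 0 (k : NNReal)⁻¹)
        {v | γ / 2 < ∑ r, h r * (α * g r + √(1 - α ^ 2) * v r)} =
      gaussianReal 0 (k : NNReal)⁻¹
        (Set.Ioi (threshold γ (∑ r, h r * g r) (∑ r, h r ^ 2) α)) := by
  set n := ∑ r, h r ^ 2
  set β := √(1 - α ^ 2)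
  have hβ : 0 < β := Real.sqrt_pos.2 (by linarith)
  have hn : 0 < √n := Real.sqrt_pos.2 hh
  have hlaw := gaussianReal_pi_map_linear (k : NNReal)⁻¹ (fun r => h r / √n) (k : NNReal)⁻¹ (by
    simp_rw [div_pow]
    rw [← Finset.sum_div, Real.sq_sqrt hh.le, div_self hh.ne', mul_one])
  have hIoi := congrArg
    (fun μ : Measure ℝ => μ (Set.Ioi (threshold γ (∑ r, h r * g r) n α))) hlaw
  refine Eq.trans ?_ hIoi
  rw [Measure.map_apply (by fun_prop) measurableSet_Ioi]
  refine congrArg _ (Set.ext fun v => ?_)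
  change γ / 2 < (∑ r, h r * (α * g r + β * v r)) ↔
    threshold γ (∑ r, h r * g r) n α < (∑ r, h r / √n * v r)
  rw [threshold, div_lt_iff₀ (mul_pos hβ hn)]
  have e1 : ∑ r, h r * (α * g r + β * v r) = α * (∑ r, h r * g r) + β * ∑ r, h r * v r := by
    simp only [Finset.mul_sum, ← Finset.sum_add_distrib]
    exact Finset.sum_congr rfl fun r _ => by ring
  have e2 : (∑ r, h r / √n * v r) * (β * √n) = β * ∑ r, h r * v r := by
    simp only [Finset.mul_sum, Finset.sum_mul]
    exact Finset.sum_congr rfl fun r _ => by field_simp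
  rw [e1, e2]
  constructor <;> intro h <;> linarith

/-- The joint law of the projections `Aw` and `Ax`. -/
lemma pi_pi_gaussianReal_map_matVec {k m : ℕ} (v : NNReal) (w x : Fin m → ℝ) (α β : ℝ)
    (hw : ∑ j, w j ^ 2 = 1) (hx : ∑ j, x j ^ 2 = 1) (hα : dotp w x = α)
    (hβ : α ^ 2 + β ^ 2 = 1) :
    (Measure.pi fun _ : Fin k => Measure.pi fun _ : Fin m => gaussianReal 0 v).map
        (fun A => (matVec A w, matVec A x)) =
      ((Measure.pi fun _ : Fin k => gaussianReal 0 v).prod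
        (Measure.pi fun _ : Fin k => gaussianReal 0 v)).map
        (fun p => (p.1, fun r => α * p.1 r + β * p.2 r)) := by
  let e := MeasurableEquiv.arrowProdEquivProdArrow ℝ ℝ (Fin k)
  have he := measurePreserving_arrowProdEquivProdArrow ℝ ℝ (Fin k)
    (fun _ => gaussianReal 0 v) (fun _ => gaussianReal 0 v)
  have hm : Measurable fun a : Fin m → ℝ => (∑ j, a j * w j, ∑ j, a j * x j) := by fun_prop
  have hm' : Measurable fun p : ℝ × ℝ => (p.1, α * p.1 + β * p.2) := by fun_prop
  have h1 : (Measure.pi fun _ : Fin k => Measure.pi fun _ : Fin m => gaussianReal 0 v).map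
        (fun A r => (∑ j, A r j * w j, ∑ j, A r j * x j)) =
      (Measure.pi fun _ : Fin k => (gaussianReal 0 v).prod (gaussianReal 0 v)).map
        (fun p r => ((p r).1, α * (p r).1 + β * (p r).2)) := by
    have := Measure.isProbabilityMeasure_map (μ := Measure.pi fun _ : Fin m => gaussianReal 0 v)
      hm.aemeasurable
    have := Measure.isProbabilityMeasure_map
      (μ := (gaussianReal 0 v).prod (gaussianReal 0 v)) hm'.aemeasurable
    rw [Measure.pi_map_pi (f := fun _ (a : Fin m → ℝ) => (∑ j, a j * w j, ∑ j, a j * x j))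
        (fun _ => hm.aemeasurable),
      Measure.pi_map_pi (f := fun _ (p : ℝ × ℝ) => (p.1, α * p.1 + β * p.2))
        (fun _ => hm'.aemeasurable), gaussianReal_pi_map_pair v w x α β hw hx hα hβ]
  have h2 := congrArg (Measure.map e) h1
  rw [Measure.map_map e.measurable (by fun_prop), Measure.map_map e.measurable (by fun_prop)] at h2
  rw [← he.map_eq, Measure.map_map (by fun_prop) he.measurable]
  exact h2

lemma roundMeasure_margin {k m : ℕ} (hk : 0 < k) (γ α : ℝ) (hα : α ^ 2 < 1)
    (w x : Fin m → ℝ) (y : ℝ) (hw : ∑ j, w j ^ 2 = 1) (hx : ∑ j, x j ^ 2 = 1)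
    (hy : y = 1 ∨ y = -1) (hwx : y * dotp w x = α) :
    roundMeasure k m {p | γ / 2 < y * ∑ r, hRound p.1 p.2 w r * ∑ s, p.1 r s * x s} =
      ∫⁻ t, ∫⁻ g, condProb k γ α g t ∂(Measure.pi fun _ : Fin k => gaussianReal 0 (k : NNReal)⁻¹)
        ∂(Measure.pi fun _ : Fin k => volume.restrict (Set.Icc (0 : ℝ) 1)) := by
  set x' : Fin m → ℝ := fun j => y * x j
  have hy2 : y ^ 2 = 1 := by rcases hy with rfl | rfl <;> norm_num
  have hx1 : ∑ j, x' j ^ 2 = 1 := by simp [x', mul_pow, hy2, hx]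
  have hd : dotp w x' = α := by
    rw [← hwx, dotp, dotp, Finset.mul_sum]
    exact Finset.sum_congr rfl fun j _ => by simp only [x']; ring
  set P := Measure.pi fun _ : Fin k => gaussianReal 0 (k : NNReal)⁻¹
  set τ := Measure.pi fun _ : Fin k => volume.restrict (Set.Icc (0 : ℝ) 1)
  set S : Set (((Fin k → ℝ) × (Fin k → ℝ)) × (Fin k → ℝ)) :=
    {q | γ / 2 < ∑ r, roundCoord k (q.1.1 r) (q.2 r) * q.1.2 r} with hS
  have hSm : MeasurableSet S := by
    refine measurableSet_lt measurable_const (Finset.measurable_sum _ fun r _ => ?_)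
    refine Measurable.mul ((measurable_roundCoord k).comp
      (f := fun q : ((Fin k → ℝ) × (Fin k → ℝ)) × (Fin k → ℝ) => (q.1.1 r, q.2 r)) ?_) ?_ <;>
    fun_prop
  have hF : Measurable fun A : Fin k → Fin m → ℝ => (matVec A w, matVec A x') := by
    unfold matVec
    fun_prop
  have hset : {p : (Fin k → Fin m → ℝ) × (Fin k → ℝ) |
      γ / 2 < y * ∑ r, hRound p.1 p.2 w r * ∑ s, p.1 r s * x s} =
      Prod.map (fun A : Fin k → Fin m → ℝ => (matVec A w, matVec A x')) id ⁻¹' S := by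
    ext p
    have : y * ∑ r, hRound p.1 p.2 w r * ∑ s, p.1 r s * x s =
        ∑ r, roundCoord k (matVec p.1 w r) (p.2 r) * matVec p.1 x' r := by
      rw [Finset.mul_sum]
      refine Finset.sum_congr rfl fun r _ => ?_
      have : matVec p.1 x' r = y * ∑ s, p.1 r s * x s := by
        rw [matVec, Finset.mul_sum]
        exact Finset.sum_congr rfl fun j _ => by simp only [x']; ring
      rw [this]
      change y * (roundCoord k (matVec p.1 w r) (p.2 r) * _) = _
      ring
    simp only [Set.mem_ofPred_eq, Set.mem_preimage, hS, Prod.map, id, this]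
  rw [hset, roundMeasure, ← Measure.map_apply (hF.prodMap measurable_id) hSm,
    ← Measure.map_prod_map _ _ hF measurable_id,
    pi_pi_gaussianReal_map_matVec _ w x' α (√(1 - α ^ 2)) hw hx1 hd
      (by rw [Real.sq_sqrt (by linarith)]; ring), Measure.map_id,
    Measure.prod_apply_symm hSm]
  refine lintegral_congr fun t => ?_
  have hSt : MeasurableSet ((fun q : (Fin k → ℝ) × (Fin k → ℝ) => (q, t)) ⁻¹' S) :=
    hSm.preimage (by fun_prop)
  rw [Measure.map_apply (by fun_prop) hSt,
    Measure.prod_apply (hSt.preimage (by fun_prop))]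
  refine lintegral_congr fun g => ?_
  rw [condProb, ← pi_gaussianReal_margin γ α hα (fun r => roundCoord k (g r) (t r)) g
    (lt_of_lt_of_le (by norm_num) (le_sum_roundCoord_sq hk g t))]
  rfl

/-- Pointwise comparison of the conditional probabilities at two margins. -/
lemma condProb_real_add_le {k : ℕ} (hk : 0 < k) {γ α₁ α₂ : ℝ} (h0 : 0 ≤ α₁) (h12 : α₁ ≤ α₂)
    (h2 : α₂ ≤ γ) (hγ : γ ≤ 1 / 100) (g t : Fin k → ℝ) :
    (condProb k γ α₁ g t).toReal + (√(2 * Real.pi * ((k : NNReal)⁻¹ : NNReal)))⁻¹ * (α₂ - α₁) *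
        ((1 / 240) * Real.exp (-(1 / 50)) ^ k *
          {g : Fin k → ℝ | 1 / 25 ≤ ∑ r, g r ^ 2 ∧ ∑ r, g r ^ 2 ≤ 3}.indicator 1 g) ≤
      (condProb k γ α₂ g t).toReal + (√(2 * Real.pi * ((k : NNReal)⁻¹ : NNReal)))⁻¹ * (α₂ - α₁) *
        {g : Fin k → ℝ | ∑ r, g r ^ 2 < 1 / 25}.indicator 1 g := by
  have hk' : (0 : ℝ) < k := by exact_mod_cast hk
  have hv : (k : NNReal)⁻¹ ≠ 0 := by simp; omega
  have hn := le_sum_roundCoord_sq hk g t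
  have hn' := sum_roundCoord_sq_le hk g t
  have ha := le_sum_roundCoord_mul hk g t
  have hc := Finset.sum_mul_sq_le_sq_mul_sq Finset.univ (fun r => roundCoord k (g r) (t r)) g
  simp only [condProb]
  change (gaussianReal 0 (k : NNReal)⁻¹).real _ + _ ≤ (gaussianReal 0 (k : NNReal)⁻¹).real _ + _
  set n := ∑ r, roundCoord k (g r) (t r) ^ 2
  set a := ∑ r, roundCoord k (g r) (t r) * g r
  set N := ∑ r, g r ^ 2
  set c := (√(2 * Real.pi * ((k : NNReal)⁻¹ : NNReal)))⁻¹
  have hcpos : 0 ≤ c := by positivity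
  by_cases hB : N < 1 / 25
  · rw [Set.indicator_of_notMem (by simp only [Set.mem_ofPred_eq]; intro h; linarith [h.1]),
      Set.indicator_of_mem (by exact hB)]
    have h3 := abs_threshold_sub_le h0 h12 (h2.trans hγ) (h0.trans (h12.trans h2)) hγ hn hB.le hc
    have h4 := (neg_le_abs _).trans
      (abs_gaussianReal_real_Ioi_sub_le (threshold γ a n α₁) (threshold γ a n α₂) hv)
    have h5 := mul_le_mul_of_nonneg_left h3 hcpos
    simp only [Pi.one_apply, mul_zero, mul_one, add_zero]
    linarith
  have h3 := threshold_sub_le (n := n) h0 h12 (h2.trans hγ) hγ (show 1 / 100 ≤ a by linarith)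
  rw [Set.indicator_of_notMem (s := {g : Fin k → ℝ | ∑ r, g r ^ 2 < 1 / 25}) (by exact hB)]
  have hle : threshold γ a n α₂ ≤ threshold γ a n α₁ := by
    have : 0 ≤ (α₂ - α₁) / 120 * (√n)⁻¹ := mul_nonneg (by linarith) (by positivity)
    linarith
  by_cases hG : N ≤ 3
  · rw [Set.indicator_of_mem (by exact ⟨not_lt.1 hB, hG⟩)]
    have hs : (1 : ℝ) / 2 ≤ (√n)⁻¹ := by
      rw [one_div, inv_le_inv₀ (by norm_num) (Real.sqrt_pos.2 (by linarith)),
        Real.sqrt_le_left (by norm_num)]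
      linarith
    have h4 := le_gaussianReal_real_Ioi_sub hle hv
      (threshold_sq_le h0 (h12.trans h2) hγ hn hG hc)
      (threshold_sq_le (h0.trans h12) h2 hγ hn hG hc)
    have h5 : Real.exp (-(1 / 25) / (2 * (((k : NNReal)⁻¹ : NNReal) : ℝ))) =
        Real.exp (-(1 / 50)) ^ k := by
      rw [← Real.exp_nat_mul]
      congr 1
      push_cast
      field_simp
      norm_num
    rw [h5] at h4
    have h6 : (α₂ - α₁) / 240 ≤ threshold γ a n α₁ - threshold γ a n α₂ := by
      refine le_trans ?_ h3
      calc (α₂ - α₁) / 240 = (α₂ - α₁) / 120 * (1 / 2) := by ring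
        _ ≤ _ := mul_le_mul_of_nonneg_left hs (by linarith)
    have h7 := mul_le_mul_of_nonneg_left h6
      (show 0 ≤ c * Real.exp (-(1 / 50)) ^ k by positivity)
    simp only [Pi.one_apply, mul_zero, mul_one, add_zero]
    linarith
  · rw [Set.indicator_of_notMem (by simp only [Set.mem_ofPred_eq]; intro h; exact hG h.2)]
    simp only [mul_zero, add_zero]
    exact measureReal_mono (Set.Ioi_subset_Ioi hle)

/-- The typical event outweighs the event where `g` is short. -/
lemma measureReal_short_le {k : ℕ} (hk : 20 ≤ k) :
    (Measure.pi fun _ : Fin k => gaussianReal 0 (k : NNReal)⁻¹).real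
        {g | ∑ r, g r ^ 2 < 1 / 25} ≤
      (1 / 240) * Real.exp (-(1 / 50)) ^ k *
        (Measure.pi fun _ : Fin k => gaussianReal 0 (k : NNReal)⁻¹).real
          {g | 1 / 25 ≤ ∑ r, g r ^ 2 ∧ ∑ r, g r ^ 2 ≤ 3} := by
  set P := Measure.pi fun _ : Fin k => gaussianReal 0 (k : NNReal)⁻¹
  have hB := measureReal_sum_sq_lt_le (k := k) (by omega)
  have hT := measureReal_three_lt_sum_sq_le (k := k) (by omega)
  have hp : ((2 : ℝ) / 3) ^ k ≤ 1 / 1000 :=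
    (pow_le_pow_of_le_one (by norm_num) (by norm_num) hk).trans (by norm_num)
  have hp' : ((1 : ℝ) / 3) ^ k ≤ 1 / 1000 :=
    (pow_le_pow_left₀ (by norm_num) (by norm_num) k).trans hp
  have hG : 1 / 2 ≤ P.real {g | 1 / 25 ≤ ∑ r, g r ^ 2 ∧ ∑ r, g r ^ 2 ≤ 3} := by
    have hu : (Set.univ : Set (Fin k → ℝ)) ⊆ {g | 1 / 25 ≤ ∑ r, g r ^ 2 ∧ ∑ r, g r ^ 2 ≤ 3} ∪
        ({g | ∑ r, g r ^ 2 < 1 / 25} ∪ {g | 3 < ∑ r, g r ^ 2}) := by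
      intro g _
      simp only [Set.mem_union, Set.mem_ofPred_eq]
      grind
    have h1 := measureReal_mono (μ := P) hu
    have h2 := measureReal_union_le (μ := P) {g | 1 / 25 ≤ ∑ r, g r ^ 2 ∧ ∑ r, g r ^ 2 ≤ 3}
      ({g | ∑ r, g r ^ 2 < 1 / 25} ∪ {g | 3 < ∑ r, g r ^ 2})
    have h3 := measureReal_union_le (μ := P) {g | ∑ r, g r ^ 2 < 1 / 25} {g | 3 < ∑ r, g r ^ 2}
    rw [probReal_univ] at h1
    linarith
  have he : (1 / 2 : ℝ) ≤ Real.exp (-(1 / 50)) := by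
    linarith [Real.add_one_le_exp (-(1 / 50) : ℝ)]
  calc _ ≤ ((1 : ℝ) / 3) ^ k := hB
    _ = (2 / 3) ^ k * (1 / 2) ^ k := by rw [← mul_pow]; norm_num
    _ ≤ 1 / 1000 * Real.exp (-(1 / 50)) ^ k := by gcongr
    _ ≤ (1 / 240) * Real.exp (-(1 / 50)) ^ k * (1 / 2) := by
        have : 0 ≤ Real.exp (-(1 / 50)) ^ k := by positivity
        linarith
    _ ≤ _ := by gcongr

lemma lintegral_condProb_mono {k : ℕ} (hk : 20 ≤ k) {γ α₁ α₂ : ℝ} (h0 : 0 ≤ α₁)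
    (h12 : α₁ ≤ α₂) (h2 : α₂ ≤ γ) (hγ : γ ≤ 1 / 100) (t : Fin k → ℝ) :
    ∫⁻ g, condProb k γ α₁ g t ∂(Measure.pi fun _ : Fin k => gaussianReal 0 (k : NNReal)⁻¹) ≤
      ∫⁻ g, condProb k γ α₂ g t ∂(Measure.pi fun _ : Fin k => gaussianReal 0 (k : NNReal)⁻¹) := by
  set P := Measure.pi fun _ : Fin k => gaussianReal 0 (k : NNReal)⁻¹
  set C := (√(2 * Real.pi * ((k : NNReal)⁻¹ : NNReal)))⁻¹ * (α₂ - α₁)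
  have hC : 0 ≤ C := mul_nonneg (by positivity) (by linarith)
  set K := (1 / 240) * Real.exp (-(1 / 50)) ^ k
  have hK : 0 ≤ K := by positivity
  set G := {g : Fin k → ℝ | 1 / 25 ≤ ∑ r, g r ^ 2 ∧ ∑ r, g r ^ 2 ≤ 3}
  set B := {g : Fin k → ℝ | ∑ r, g r ^ 2 < 1 / 25}
  have hBm : MeasurableSet B := measurableSet_lt (by fun_prop) (by fun_prop)
  have hGm : MeasurableSet G :=
    MeasurableSet.inter (s₁ := {g : Fin k → ℝ | 1 / 25 ≤ ∑ r, g r ^ 2})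
      (s₂ := {g : Fin k → ℝ | ∑ r, g r ^ 2 ≤ 3})
      (measurableSet_le (by fun_prop) (by fun_prop)) (measurableSet_le (by fun_prop) (by fun_prop))
  have hfin : ∀ α g, condProb k γ α g t ≠ ⊤ := fun α g => measure_ne_top _ _
  have hpt : ∀ g, condProb k γ α₁ g t + G.indicator (fun _ => ENNReal.ofReal (C * K)) g ≤
      condProb k γ α₂ g t + B.indicator (fun _ => ENNReal.ofReal C) g := by
    intro g
    have h := condProb_real_add_le (by omega) h0 h12 h2 hγ g t
    have e1 : G.indicator (fun _ => ENNReal.ofReal (C * K)) g =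
        ENNReal.ofReal (C * (K * G.indicator 1 g)) := by
      by_cases hg : g ∈ G <;> simp [hg]
    have e2 : B.indicator (fun _ => ENNReal.ofReal C) g =
        ENNReal.ofReal (C * B.indicator 1 g) := by
      by_cases hg : g ∈ B <;> simp [hg]
    have i1 : (0 : ℝ) ≤ G.indicator 1 g := Set.indicator_nonneg (by simp) g
    have i2 : (0 : ℝ) ≤ B.indicator 1 g := Set.indicator_nonneg (by simp) g
    rw [e1, e2, ← ENNReal.ofReal_toReal (hfin α₁ g), ← ENNReal.ofReal_toReal (hfin α₂ g),
      ← ENNReal.ofReal_add ENNReal.toReal_nonneg (by positivity),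
      ← ENNReal.ofReal_add ENNReal.toReal_nonneg (by positivity)]
    exact ENNReal.ofReal_le_ofReal h
  have hint := lintegral_mono (μ := P) hpt
  rw [lintegral_add_right _ (measurable_const.indicator hGm),
    lintegral_add_right _ (measurable_const.indicator hBm), lintegral_indicator_const hGm,
    lintegral_indicator_const hBm] at hint
  have hBG : ENNReal.ofReal C * P B ≤ ENNReal.ofReal (C * K) * P G := by
    rw [← ofReal_measureReal (μ := P) (s := B), ← ofReal_measureReal (μ := P) (s := G),
      ← ENNReal.ofReal_mul hC, ← ENNReal.ofReal_mul (by positivity), mul_assoc C K]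
    exact ENNReal.ofReal_le_ofReal (mul_le_mul_of_nonneg_left (measureReal_short_le hk) hC)
  refine (ENNReal.add_le_add_iff_right ?_).1 (hint.trans (by gcongr))
  exact ENNReal.mul_ne_top ENNReal.ofReal_ne_top (measure_ne_top _ _)

/-- (Claim A.3 of the paper.) Monotonicity of the probability that the
rounded margin exceeds `γ_i/2`, as a function of the original margin in `[0, γ_i]`. -/
theorem statement14 : ∃ cγ : ℝ, 0 < cγ ∧ ∃ k₀ : ℕ, ∀ (m k : ℕ), k₀ ≤ k →
    ∀ γi : ℝ, 0 < γi → γi ≤ cγ →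
    ∀ (w₁ x₁ w₂ x₂ : Fin m → ℝ) (y₁ y₂ : ℝ),
    (∑ j, w₁ j ^ 2) = 1 → (∑ j, x₁ j ^ 2) = 1 →
    (∑ j, w₂ j ^ 2) = 1 → (∑ j, x₂ j ^ 2) = 1 →
    (y₁ = 1 ∨ y₁ = -1) → (y₂ = 1 ∨ y₂ = -1) →
    0 ≤ y₁ * dotp w₁ x₁ → y₁ * dotp w₁ x₁ ≤ y₂ * dotp w₂ x₂ →
    y₂ * dotp w₂ x₂ ≤ γi →
    roundMeasure k m
        {p | γi / 2 < y₁ * ∑ r, hRound p.1 p.2 w₁ r * ∑ s, p.1 r s * x₁ s} ≤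
      roundMeasure k m
        {p | γi / 2 < y₂ * ∑ r, hRound p.1 p.2 w₂ r * ∑ s, p.1 r s * x₂ s} := by
  refine ⟨1 / 100, by norm_num, 20, ?_⟩
  intro m k hk γ hγ0 hγ w₁ x₁ w₂ x₂ y₁ y₂ hw₁ hx₁ hw₂ hx₂ hy₁ hy₂ h0 h12 h2
  rw [roundMeasure_margin (by omega) γ _ (by nlinarith) w₁ x₁ y₁ hw₁ hx₁ hy₁ rfl,
    roundMeasure_margin (by omega) γ _ (by nlinarith) w₂ x₂ y₂ hw₂ hx₂ hy₂ rfl]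
  exact lintegral_mono fun t => lintegral_condProb_mono hk h0 h12 h2 hγ t
end
end
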